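/- Let A be a separable unital C*-algebra and let H be a separable infinite-dimensional Hilbert space. Suppose that for every finite-dimensional irreducible unital representation ρ of A there exists a weakly mixing unital representation θ of A on a separable Hilbert space such that ρ ≺ θ. Then WM(A,H) is a dense Gδ subset of Rep(A,H) in the point-strong operator topology. -/

import Mathlib

open scoped InnerProductSpace

noncomputable section

/-- The space of unital representations of `A` on `H`, i.e. unital `*`-homomorphisms
`A → B(H)`. -/
abbrev CRep (A H : Type*) [CStarAlgebra A] [NormedAddCommGroup H]
    [InnerProductSpace ℂ H] [CompleteSpace H] : Type _ :=
  A →⋆ₐ[ℂ] (H →L[ℂ] H)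

/-- The point-strong operator topology on `CRep A H`: the topology of pointwise convergence
with `B(H)` carrying the strong operator topology (i.e. pointwise convergence on vectors). -/
instance CRep.instTopologicalSpace (A H : Type*) [CStarAlgebra A] [NormedAddCommGroup H]
    [InnerProductSpace ℂ H] [CompleteSpace H] : TopologicalSpace (CRep A H) :=
  TopologicalSpace.induced (fun π => (fun (a : A) (x : H) => π a x)) inferInstance

/-- A closed subspace `K` is invariant under a unital representation `π`. -/
def CRepInvariant {A H : Type*} [CStarAlgebra A] [NormedAddCommGroup H]
    [InnerProductSpace ℂ H] [CompleteSpace H]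
    (π : CRep A H) (K : Submodule ℂ H) : Prop :=
  ∀ a : A, ∀ x ∈ K, π a x ∈ K

/-- A unital representation is weakly mixing if it admits no nonzero finite-dimensional
closed invariant subspace. -/
def CRepWeaklyMixing {A H : Type*} [CStarAlgebra A] [NormedAddCommGroup H]
    [InnerProductSpace ℂ H] [CompleteSpace H]
    (π : CRep A H) : Prop :=
  ∀ K : Submodule ℂ H, IsClosed (K : Set H) → FiniteDimensional ℂ K →
    CRepInvariant π K → K = ⊥

/-- A unital representation is irreducible if its only closed invariant subspaces are `⊥`
and the whole space. -/
def CRepIrreducible {A H : Type*} [CStarAlgebra A] [NormedAddCommGroup H]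
    [InnerProductSpace ℂ H] [CompleteSpace H] (π : CRep A H) : Prop :=
  ∀ K : Submodule ℂ H, IsClosed (K : Set H) → (∀ a : A, ∀ x ∈ K, π a x ∈ K) →
    K = ⊥ ∨ K = ⊤

/-- The weak containment relation `π ≺ ρ`. -/
def CRepPrec {A H K : Type*} [CStarAlgebra A] [NormedAddCommGroup H]
    [InnerProductSpace ℂ H] [CompleteSpace H] [NormedAddCommGroup K]
    [InnerProductSpace ℂ K] [CompleteSpace K]
    (π : CRep A H) (ρ : CRep A K) : Prop :=
  ∀ (Ω : Finset A) (n : ℕ) (ξ : Fin n → H), Orthonormal ℂ ξ → ∀ ε : ℝ, 0 < ε →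
    ∃ ζ : Fin n → K, Orthonormal ℂ ζ ∧
      ∀ a ∈ Ω, ∀ i : Fin n, ‖⟪π a (ξ i), ξ i⟫_ℂ - ⟪ρ a (ζ i), ζ i⟫_ℂ‖ < ε

section Basic

variable {A H K : Type*} [CStarAlgebra A]
  [NormedAddCommGroup H] [InnerProductSpace ℂ H] [CompleteSpace H]
  [NormedAddCommGroup K] [InnerProductSpace ℂ K] [CompleteSpace K]

namespace CRep

theorem inner_apply_left (π : CRep A H) (a : A) (x y : H) :
    ⟪π a x, y⟫_ℂ = ⟪x, π (star a) y⟫_ℂ := by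
  rw [map_star, ContinuousLinearMap.star_eq_adjoint, ContinuousLinearMap.adjoint_inner_right]

theorem inner_star_apply_left (π : CRep A H) (a : A) (x y : H) :
    ⟪π (star a) x, y⟫_ℂ = ⟪x, π a y⟫_ℂ := by
  rw [inner_apply_left, star_star]

theorem norm_apply_apply_le (π : CRep A H) (a : A) (x : H) : ‖π a x‖ ≤ ‖a‖ * ‖x‖ :=
  (π a).le_of_opNorm_le (NonUnitalStarAlgHom.norm_apply_le π a) x

theorem continuous_apply_apply (a : A) (x : H) : Continuous fun π : CRep A H => π a x := by
  have h : Continuous fun (π : CRep A H) (a : A) (x : H) => π a x := continuous_induced_dom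
  exact (continuous_apply x).comp ((continuous_apply a).comp h)

/-- Approximation on finite sets of algebra elements and vectors gives membership in the
closure for the point-strong operator topology. -/
theorem mem_closure_of_approx {S : Set (CRep A H)} {π : CRep A H}
    (h : ∀ (Ω : Finset A) (F : Finset H) (ε : ℝ), 0 < ε →
      ∃ σ ∈ S, ∀ a ∈ Ω, ∀ x ∈ F, ‖σ a x - π a x‖ < ε) : π ∈ closure S := by
  classical
  choose σ hσS hσ using fun i : (Finset A × Finset H) × ℕ =>
    h i.1.1 i.1.2 (1 / ((i.2 : ℝ) + 1)) Nat.one_div_pos_of_nat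
  refine mem_closure_of_tendsto (f := σ) (b := Filter.atTop) ?_ (Filter.Eventually.of_forall hσS)
  rw [nhds_induced, Filter.tendsto_comap_iff, tendsto_pi_nhds]
  intro a
  rw [tendsto_pi_nhds]
  intro x
  rw [Metric.tendsto_atTop]
  intro ε hε
  obtain ⟨n, hn⟩ := exists_nat_one_div_lt hε
  refine ⟨(({a}, {x}), n), fun i hi => ?_⟩
  obtain ⟨⟨h1, h2⟩, h3⟩ := hi
  have h3' : (n : ℝ) ≤ i.2 := by exact_mod_cast h3
  rw [dist_eq_norm]
  refine (hσ i a (h1 (by simp)) x (h2 (by simp))).trans (lt_of_le_of_lt ?_ hn)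
  gcongr

/-- The restriction of a representation to a closed invariant subspace. -/
def restrict (π : CRep A H) (M : Submodule ℂ H) [CompleteSpace M] (hM : CRepInvariant π M) :
    CRep A M where
  toFun a := ((π a).comp M.subtypeL).codRestrict M fun x => hM a x x.2
  map_one' := by ext; simp
  map_mul' a b := by ext x; exact DFunLike.congr_fun (map_mul π a b) (x : H)
  map_zero' := by ext; simp
  map_add' a b := by ext x; exact DFunLike.congr_fun (map_add π a b) (x : H)
  commutes' r := by ext; simp [Algebra.algebraMap_eq_smul_one]
  map_star' a := by
    rw [ContinuousLinearMap.star_eq_adjoint, ContinuousLinearMap.eq_adjoint_iff]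
    intro x y
    exact inner_star_apply_left π a x y

/-- The direct sum of two representations. -/
def prod (π : CRep A H) (ρ : CRep A K) : CRep A (WithLp 2 (H × K)) where
  toFun a := (WithLp.prodContinuousLinearEquiv 2 ℂ H K).symm.toContinuousLinearMap.comp
    (((π a).prodMap (ρ a)).comp (WithLp.prodContinuousLinearEquiv 2 ℂ H K).toContinuousLinearMap)
  map_one' := by ext x; apply WithLp.ofLp_injective; ext <;> simp
  map_mul' a b := by ext x; apply WithLp.ofLp_injective; ext <;> simp
  map_zero' := by ext x; apply WithLp.ofLp_injective; ext <;> simp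
  map_add' a b := by ext x; apply WithLp.ofLp_injective; ext <;> simp
  commutes' r := by
    ext x; apply WithLp.ofLp_injective; ext <;> simp [Algebra.algebraMap_eq_smul_one]
  map_star' a := by
    rw [ContinuousLinearMap.star_eq_adjoint, ContinuousLinearMap.eq_adjoint_iff]
    intro x y
    simp only [WithLp.prod_inner_apply]
    exact congrArg₂ (· + ·) (inner_star_apply_left π a _ _) (inner_star_apply_left ρ a _ _)

/-- The transport of a representation along a unitary. -/
def conj (π : CRep A H) (U : H ≃ₗᵢ[ℂ] K) : CRep A K :=
  (U.conjStarAlgEquiv : (H →L[ℂ] H) →⋆ₐ[ℂ] (K →L[ℂ] K)).comp π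

@[simp]
theorem conj_apply (π : CRep A H) (U : H ≃ₗᵢ[ℂ] K) (a : A) (x : K) :
    π.conj U a x = U (π a (U.symm x)) := rfl

end CRep

namespace CRepInvariant

variable {π : CRep A H} {ρ : CRep A K} {M N : Submodule ℂ H}

theorem map {T : H →ₗ[ℂ] K} (hT : ∀ a x, T (π a x) = ρ a (T x)) (hM : CRepInvariant π M) :
    CRepInvariant ρ (M.map T) := by
  rintro a _ ⟨x, hx, rfl⟩
  exact ⟨π a x, hM a x hx, hT a x⟩

theorem sup (hM : CRepInvariant π M) (hN : CRepInvariant π N) : CRepInvariant π (M ⊔ N) := by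
  intro a x hx
  obtain ⟨y, hy, z, hz, rfl⟩ := Submodule.mem_sup.1 hx
  rw [map_add]
  exact Submodule.add_mem_sup (hM a y hy) (hN a z hz)

theorem sSup {S : Set (Submodule ℂ H)} (hS : ∀ M ∈ S, CRepInvariant π M) :
    CRepInvariant π (SupSet.sSup S) := by
  intro a
  change SupSet.sSup S ≤ (SupSet.sSup S).comap (π a : H →ₗ[ℂ] H)
  exact sSup_le fun M hM x hx => le_sSup hM (hS M hM a x hx)

theorem orthogonal (hM : CRepInvariant π M) : CRepInvariant π Mᗮ := by
  intro a x hx y hy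
  rw [← CRep.inner_star_apply_left]
  exact hx _ (hM _ y hy)

theorem starProjection_apply [M.HasOrthogonalProjection] (hM : CRepInvariant π M) (a : A)
    (x : H) : M.starProjection (π a x) = π a (M.starProjection x) := by
  refine Submodule.eq_starProjection_of_mem_orthogonal
    (hM a _ (M.starProjection_apply_mem x)) ?_
  rw [← map_sub]
  exact hM.orthogonal a _ (Submodule.sub_starProjection_mem_orthogonal x)

end CRepInvariant

namespace CRepWeaklyMixing

variable {π : CRep A H} {ρ : CRep A K}

theorem le_ker {M : Submodule ℂ H} {T : H →ₗ[ℂ] K} (hρ : CRepWeaklyMixing ρ)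
    (hT : ∀ a x, T (π a x) = ρ a (T x)) [FiniteDimensional ℂ M] (hM : CRepInvariant π M) :
    M ≤ LinearMap.ker T := by
  have h := hρ (M.map T) (Submodule.closed_of_finiteDimensional _) inferInstance (hM.map hT)
  exact LinearMap.le_ker_iff_map.2 h

theorem prod (hπ : CRepWeaklyMixing π) (hρ : CRepWeaklyMixing ρ) :
    CRepWeaklyMixing (π.prod ρ) := by
  intro M _ _ hM
  rw [eq_bot_iff]
  intro x hx
  have h1 := hπ.le_ker (T := (WithLp.fstL 2 ℂ H K : WithLp 2 (H × K) →ₗ[ℂ] H))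
    (fun _ _ => rfl) hM hx
  have h2 := hρ.le_ker (T := (WithLp.sndL 2 ℂ H K : WithLp 2 (H × K) →ₗ[ℂ] K))
    (fun _ _ => rfl) hM hx
  rw [Submodule.mem_bot]
  exact WithLp.ofLp_injective 2 (Prod.ext h1 h2)

theorem conj (hπ : CRepWeaklyMixing π) (U : H ≃ₗᵢ[ℂ] K) : CRepWeaklyMixing (π.conj U) := by
  intro M _ _ hM
  rw [eq_bot_iff]
  intro x hx
  have h := hπ.le_ker (T := (U.symm.toLinearEquiv : K →ₗ[ℂ] H)) (fun a x => by simp) hM hx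
  simpa using h

theorem not_finiteDimensional [Nontrivial H] (hπ : CRepWeaklyMixing π) :
    ¬ FiniteDimensional ℂ H := by
  intro h
  exact top_ne_bot (hπ ⊤ isClosed_univ inferInstance fun _ _ _ => Submodule.mem_top)

end CRepWeaklyMixing

end Basic

section GDelta

variable {A H : Type*} [CStarAlgebra A]
  [NormedAddCommGroup H] [InnerProductSpace ℂ H] [CompleteSpace H]

/-- On the unit ball of the dual, evaluation is jointly continuous for the weak-star topology
on functionals and the norm topology on vectors. -/
theorem continuous_eval_unitBall_weakDual {E : Type*} [NormedAddCommGroup E] [NormedSpace ℂ E] :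
    Continuous fun p : (WeakDual.toStrongDual ⁻¹' Metric.closedBall (0 : StrongDual ℂ E) 1) × E =>
      (p.1 : WeakDual ℂ E) p.2 := by
  rw [continuous_iff_continuousAt]
  rintro ⟨f, x⟩
  have h1 : Filter.Tendsto (fun p : (WeakDual.toStrongDual ⁻¹'
      Metric.closedBall (0 : StrongDual ℂ E) 1) × E => (p.1 : WeakDual ℂ E) x)
      (nhds (f, x)) (nhds ((f : WeakDual ℂ E) x)) :=
    (((WeakDual.eval_continuous x).comp
      (continuous_subtype_val.comp continuous_fst)).tendsto (f, x))
  have h2 : Filter.Tendsto (fun p : (WeakDual.toStrongDual ⁻¹'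
      Metric.closedBall (0 : StrongDual ℂ E) 1) × E => (p.1 : WeakDual ℂ E) (p.2 - x))
      (nhds (f, x)) (nhds 0) := by
    refine squeeze_zero_norm (a := fun p => ‖p.2 - x‖) (fun p => ?_) ?_
    · have hp : ‖WeakDual.toStrongDual (p.1 : WeakDual ℂ E)‖ ≤ 1 :=
        mem_closedBall_zero_iff.1 p.1.2
      simpa using (WeakDual.toStrongDual (p.1 : WeakDual ℂ E)).le_of_opNorm_le hp (p.2 - x)
    · have : Continuous fun p : (WeakDual.toStrongDual ⁻¹'
          Metric.closedBall (0 : StrongDual ℂ E) 1) × E => ‖p.2 - x‖ := by fun_prop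
      simpa using this.tendsto (f, x)
  have h3 := h1.add h2
  rw [add_zero] at h3
  refine h3.congr fun p => ?_
  rw [← map_add, add_sub_cancel]

/-- The representations commuting with an operator `∑ᵢ |fᵢ⟩⟨fᵢ|`, where the `fᵢ` are functionals
of norm at most one and `|fⱼ(x)| ≥ r`, form a closed set. -/
theorem isClosed_setOf_exists_commuting (n : ℕ) (j : Fin n) (x₀ : H) (r : ℝ) :
    IsClosed {π : CRep A H | ∃ f : Fin n →
        (WeakDual.toStrongDual ⁻¹' Metric.closedBall (0 : StrongDual ℂ H) 1),
      (∀ a x y, ∑ i, (f i : WeakDual ℂ H) (π a x) * star ((f i : WeakDual ℂ H) y) =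
        ∑ i, (f i : WeakDual ℂ H) x * star ((f i : WeakDual ℂ H) (π (star a) y))) ∧
      r ≤ ‖(f j : WeakDual ℂ H) x₀‖} := by
  have hcompact : CompactSpace
      (WeakDual.toStrongDual ⁻¹' Metric.closedBall (0 : StrongDual ℂ H) 1) :=
    isCompact_iff_compactSpace.1 (WeakDual.isCompact_closedBall 0 1)
  have hcont : ∀ (i : Fin n) (g : CRep A H → H), Continuous g → Continuous fun p : CRep A H ×
      (Fin n → (WeakDual.toStrongDual ⁻¹' Metric.closedBall (0 : StrongDual ℂ H) 1)) =>
      (p.2 i : WeakDual ℂ H) (g p.1) := by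
    intro i g hg
    have h : Continuous fun p : CRep A H × (Fin n →
        (WeakDual.toStrongDual ⁻¹' Metric.closedBall (0 : StrongDual ℂ H) 1)) =>
        (p.2 i, g p.1) :=
      ((continuous_apply i).comp continuous_snd).prodMk (hg.comp continuous_fst)
    exact continuous_eval_unitBall_weakDual.comp h
  have hclosed : IsClosed {p : CRep A H ×
      (Fin n → (WeakDual.toStrongDual ⁻¹' Metric.closedBall (0 : StrongDual ℂ H) 1)) |
      (∀ a x y, ∑ i, (p.2 i : WeakDual ℂ H) (p.1 a x) * star ((p.2 i : WeakDual ℂ H) y) =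
        ∑ i, (p.2 i : WeakDual ℂ H) x * star ((p.2 i : WeakDual ℂ H) (p.1 (star a) y))) ∧
      r ≤ ‖(p.2 j : WeakDual ℂ H) x₀‖} := by
    simp only [Set.ofPred_and, Set.ofPred_forall]
    refine IsClosed.inter ?_ ?_
    · refine isClosed_iInter fun a => isClosed_iInter fun x => isClosed_iInter fun y => ?_
      refine isClosed_eq (continuous_finsetSum _ fun i _ => ?_)
        (continuous_finsetSum _ fun i _ => ?_)
      · exact (hcont i _ (CRep.continuous_apply_apply a x)).mul
          (hcont i _ continuous_const).star
      · exact (hcont i _ continuous_const).mul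
          (hcont i _ (CRep.continuous_apply_apply (star a) y)).star
    · exact isClosed_le continuous_const (hcont j _ continuous_const).norm
  convert isClosedMap_fst_of_compactSpace _ hclosed
  ext π
  simp

theorem exists_commuting_of_invariant {π : CRep A H} {M : Submodule ℂ H} [FiniteDimensional ℂ M]
    (hM : CRepInvariant π M) (a : A) (x y : H) :
    ∑ i, ⟪(stdOrthonormalBasis ℂ M i : H), π a x⟫_ℂ *
        star ⟪(stdOrthonormalBasis ℂ M i : H), y⟫_ℂ =
      ∑ i, ⟪(stdOrthonormalBasis ℂ M i : H), x⟫_ℂ *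
        star ⟪(stdOrthonormalBasis ℂ M i : H), π (star a) y⟫_ℂ := by
  have key : ∀ u v : H, ∑ i, ⟪(stdOrthonormalBasis ℂ M i : H), u⟫_ℂ *
      star ⟪(stdOrthonormalBasis ℂ M i : H), v⟫_ℂ = ⟪v, M.starProjection u⟫_ℂ := by
    intro u v
    have h := (stdOrthonormalBasis ℂ M).sum_inner_mul_inner
      (M.orthogonalProjectionOnto v) (M.orthogonalProjectionOnto u)
    rw [← M.inner_starProjection_left_eq_right, ← M.coe_orthogonalProjectionOnto_apply,
      ← Submodule.inner_orthogonalProjectionOnto_eq_of_mem_left, ← h]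
    refine Finset.sum_congr rfl fun i _ => ?_
    rw [Submodule.inner_orthogonalProjectionOnto_eq_of_mem_left,
      Submodule.inner_orthogonalProjectionOnto_eq_of_mem_right, mul_comm]
    congr 1
    exact inner_conj_symm _ _
  rw [key, key, hM.starProjection_apply, CRep.inner_star_apply_left]

theorem not_weaklyMixing_of_exists_commuting {π : CRep A H} {n : ℕ} (f : Fin n → StrongDual ℂ H)
    (hf : ∀ a x y, ∑ i, f i (π a x) * star (f i y) = ∑ i, f i x * star (f i (π (star a) y)))
    {j : Fin n} {x₀ : H} (hj : f j x₀ ≠ 0) : ¬ CRepWeaklyMixing π := by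
  intro hπ
  let e : Fin n → H := fun i => (InnerProductSpace.toDual ℂ H).symm (f i)
  have he : ∀ i y, star (f i y) = ⟪y, e i⟫_ℂ := fun i y => by
    rw [← inner_conj_symm, InnerProductSpace.toDual_symm_apply]; rfl
  let T : H →ₗ[ℂ] H := ∑ i, ((f i : H →ₗ[ℂ] ℂ).smulRight (e i))
  have hT : ∀ x, T x = ∑ i, f i x • e i := fun x => by simp [T]
  have hTin : ∀ x y, ⟪y, T x⟫_ℂ = ∑ i, f i x * star (f i y) := fun x y => by
    simp [hT, ← he]
  have hcomm : ∀ a x, T (π a x) = π a (T x) := fun a x => by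
    refine ext_inner_left ℂ fun y => ?_
    rw [hTin, hf, ← hTin, CRep.inner_star_apply_left]
  have hfin : FiniteDimensional ℂ (LinearMap.range T) := by
    have := FiniteDimensional.span_of_finite ℂ (Set.finite_range e)
    refine Submodule.finiteDimensional_of_le (S₂ := Submodule.span ℂ (Set.range e)) ?_
    rintro _ ⟨x, rfl⟩
    rw [hT]
    exact Submodule.sum_mem _ fun i _ =>
      Submodule.smul_mem _ _ (Submodule.subset_span (Set.mem_range_self i))
  have hbot := hπ (LinearMap.range T) (Submodule.closed_of_finiteDimensional _) hfin (by
    rintro a _ ⟨x, rfl⟩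
    exact ⟨π a x, hcomm a x⟩)
  have hzero : T x₀ = 0 := by
    have : T x₀ ∈ LinearMap.range T := ⟨x₀, rfl⟩
    rwa [hbot] at this
  have hsum := hTin x₀ x₀
  rw [hzero, inner_zero_right] at hsum
  have hsq : ∀ i, f i x₀ * star (f i x₀) = ((‖f i x₀‖ ^ 2 : ℝ) : ℂ) := fun i => by
    have := RCLike.mul_conj (f i x₀)
    push_cast
    exact this
  simp_rw [hsq] at hsum
  rw [← Complex.ofReal_sum, eq_comm, Complex.ofReal_eq_zero,
    Finset.sum_eq_zero_iff_of_nonneg (fun i _ => sq_nonneg _)] at hsum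
  have := hsum j (Finset.mem_univ j)
  exact hj (by simpa using this)

theorem isGδ_setOf_weaklyMixing [TopologicalSpace.SeparableSpace H] :
    IsGδ {π : CRep A H | CRepWeaklyMixing π} := by
  let d : ℕ → H := TopologicalSpace.denseSeq H
  have hset : {π : CRep A H | CRepWeaklyMixing π} =
      ⋂ p : (Σ n : ℕ, Fin n) × ℕ × ℕ, {π : CRep A H | ∃ f : Fin p.1.1 →
        (WeakDual.toStrongDual ⁻¹' Metric.closedBall (0 : StrongDual ℂ H) 1),
      (∀ a x y, ∑ i, (f i : WeakDual ℂ H) (π a x) * star ((f i : WeakDual ℂ H) y) =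
        ∑ i, (f i : WeakDual ℂ H) x * star ((f i : WeakDual ℂ H) (π (star a) y))) ∧
      1 / ((p.2.2 : ℝ) + 1) ≤ ‖(f p.1.2 : WeakDual ℂ H) (d p.2.1)‖}ᶜ := by
    ext π
    simp only [Set.mem_ofPred_eq, Set.mem_iInter, Set.mem_compl_iff]
    constructor
    · rintro hπ ⟨⟨n, j⟩, k, m⟩ ⟨f, hf, hj⟩
      have hpos : 0 < ‖(f j : WeakDual ℂ H) (d k)‖ := lt_of_lt_of_le Nat.one_div_pos_of_nat hj
      exact not_weaklyMixing_of_exists_commuting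
        (fun i => WeakDual.toStrongDual (f i : WeakDual ℂ H)) hf
        (j := j) (x₀ := d k) (norm_pos_iff.1 hpos) hπ
    · intro h M _ _ hM
      by_contra hne
      have hpos : 0 < Module.finrank ℂ M :=
        Module.finrank_pos_iff.2 (Submodule.nontrivial_iff_ne_bot.2 hne)
      let b := stdOrthonormalBasis ℂ M
      let j : Fin (Module.finrank ℂ M) := ⟨0, hpos⟩
      have hb : ‖(b j : H)‖ = 1 := b.orthonormal.1 j
      obtain ⟨k, hk⟩ : ∃ k, ⟪(b j : H), d k⟫_ℂ ≠ 0 := by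
        by_contra! hall
        have h0 := DenseRange.equalizer (TopologicalSpace.denseRange_denseSeq H)
          (by fun_prop : Continuous fun x : H => ⟪(b j : H), x⟫_ℂ)
          (continuous_const (y := (0 : ℂ))) (funext hall)
        have h1 : ⟪(b j : H), (b j : H)⟫_ℂ = 0 := congrFun h0 _
        rw [inner_self_eq_zero] at h1
        simp [h1] at hb
      obtain ⟨m, hm⟩ := exists_nat_one_div_lt (norm_pos_iff.2 hk)
      refine h ⟨⟨_, j⟩, k, m⟩ ⟨fun i => ⟨StrongDual.toWeakDual
        (InnerProductSpace.toDual ℂ H (b i : H)), ?_⟩, ?_, ?_⟩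
      · have : ‖(b i : H)‖ = 1 := b.orthonormal.1 i
        simp [this]
      · exact exists_commuting_of_invariant hM
      · exact hm.le
  rw [hset]
  exact .iInter_of_isOpen fun p => (isClosed_setOf_exists_commuting _ _ _ _).isOpen_compl

end GDelta

section Isometry

theorem norm_apply_le_of_orthonormalBasis {ι W E : Type*} [Fintype ι]
    [NormedAddCommGroup W] [InnerProductSpace ℂ W] [NormedAddCommGroup E] [NormedSpace ℂ E] (b : OrthonormalBasis ι ℂ W) (f : W →ₗ[ℂ] E) {δ : ℝ}
    (h : ∀ i, ‖f (b i)‖ ≤ δ) (x : W) : ‖f x‖ ≤ Fintype.card ι * δ * ‖x‖ := by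
  conv_lhs => rw [← b.sum_repr' x, map_sum]
  calc ‖∑ i, f (⟪b i, x⟫_ℂ • b i)‖ ≤ ∑ i, ‖f (⟪b i, x⟫_ℂ • b i)‖ := norm_sum_le _ _
    _ ≤ ∑ _i : ι, δ * ‖x‖ := by
      refine Finset.sum_le_sum fun i _ => ?_
      rw [map_smul, norm_smul, mul_comm δ]
      have h1 : ‖⟪b i, x⟫_ℂ‖ ≤ ‖x‖ := by
        simpa using norm_inner_le_norm (𝕜 := ℂ) (b i) x
      exact mul_le_mul h1 (h i) (norm_nonneg _) (norm_nonneg _)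
    _ = Fintype.card ι * δ * ‖x‖ := by simp [mul_assoc]

variable {W K : Type*}
  [NormedAddCommGroup W] [InnerProductSpace ℂ W] [CompleteSpace W]
  [NormedAddCommGroup K] [InnerProductSpace ℂ K] [CompleteSpace K]

/-- The isometric part of the polar decomposition of an almost isometric operator `T` is close
to `T`. -/
theorem exists_linearIsometry_near (T : W →L[ℂ] K) {δ : ℝ} (hδ : δ < 1)
    (hT : ∀ x, ‖(T.adjoint ∘L T) x - x‖ ≤ δ * ‖x‖) :
    ∃ V : W →ₗᵢ[ℂ] K, ∀ x, ‖V x - T x‖ ≤ δ * ‖x‖ := by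
  rcases subsingleton_or_nontrivial W with hW | hW
  · refine ⟨⟨0, fun x => by simp [Subsingleton.elim x 0]⟩, fun x => ?_⟩
    simp [Subsingleton.elim x 0]
  have hδ0 : 0 ≤ δ := by
    obtain ⟨x, hx⟩ := exists_ne (0 : W)
    have := (norm_nonneg _).trans (hT x)
    exact nonneg_of_mul_nonneg_left this (norm_pos_iff.2 hx)
  let S : W →L[ℂ] W := T.adjoint ∘L T
  have hS : 0 ≤ S := by
    rw [ContinuousLinearMap.nonneg_iff_isPositive]
    exact ContinuousLinearMap.isPositive_adjoint_comp_self T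
  let Q : W →L[ℂ] W := CFC.sqrt S
  have hQ : Q * Q = S := CFC.sqrt_mul_sqrt_self S hS
  have hQpos : Q.IsPositive := by
    rw [← ContinuousLinearMap.nonneg_iff_isPositive]
    exact CFC.sqrt_nonneg S
  have hSunit : IsUnit S := by
    have hlt : ‖(1 : W →L[ℂ] W) - S‖ < 1 := by
      refine lt_of_le_of_lt (ContinuousLinearMap.opNorm_le_bound _ hδ0 fun x => ?_) hδ
      rw [← norm_neg]
      simpa [S] using hT x
    simpa using isUnit_one_sub_of_norm_lt_one hlt
  have hQunit : IsUnit Q := by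
    rw [← hQ, ← sq] at hSunit
    exact (isUnit_pow_iff two_ne_zero).1 hSunit
  obtain ⟨u, hu⟩ := hQunit
  let R : W →L[ℂ] W := (u⁻¹ : (W →L[ℂ] W)ˣ)
  have hQR : ∀ x, Q (R x) = x := fun x => by
    have h : Q * R = 1 := by rw [← hu]; exact u.mul_inv
    exact DFunLike.congr_fun h x
  have hRQ : ∀ x, R (Q x) = x := fun x => by
    have h : R * Q = 1 := by rw [← hu]; exact u.inv_mul
    exact DFunLike.congr_fun h x
  have hTQ : ∀ x, ‖T x‖ = ‖Q x‖ := fun x => by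
    have h1 : ⟪T x, T x⟫_ℂ = ⟪Q x, Q x⟫_ℂ := by
      rw [← ContinuousLinearMap.adjoint_inner_right, hQpos.isSymmetric.apply_clm]
      exact (congrArg (fun B : W →L[ℂ] W => ⟪x, B x⟫_ℂ) hQ).symm
    rw [@norm_eq_sqrt_re_inner ℂ, h1, ← @norm_eq_sqrt_re_inner ℂ]
  have hV : ∀ x, ‖T (R x)‖ = ‖x‖ := fun x => by rw [hTQ, hQR]
  refine ⟨⟨(T ∘L R : W →L[ℂ] K), hV⟩, fun x => ?_⟩
  have hgrow : ∀ y, ‖y‖ ≤ ‖y + Q y‖ := fun y => by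
    refine le_of_sq_le_sq ?_ (norm_nonneg _)
    have h := @norm_add_sq ℂ _ _ _ _ y (Q y)
    have h' := hQpos.re_inner_nonneg_right y
    nlinarith [sq_nonneg ‖Q y‖]
  calc ‖T (R x) - T x‖ = ‖T (R (x - Q x))‖ := by rw [map_sub, map_sub, hRQ]
    _ = ‖x - Q x‖ := hV _
    _ ≤ ‖(x - Q x) + Q (x - Q x)‖ := hgrow _
    _ = ‖S x - x‖ := by
      rw [← hQ, map_sub, ← norm_neg]
      congr 1
      change -(x - Q x + (Q x - Q (Q x))) = Q (Q x) - x
      abel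
    _ ≤ δ * ‖x‖ := hT x

/-- An operator which almost preserves the inner products of an orthonormal basis is close to an
isometry. -/
theorem exists_linearIsometry_near_of_orthonormalBasis {ι : Type*} [Fintype ι]
    (b : OrthonormalBasis ι ℂ W) (T : W →L[ℂ] K) {δ : ℝ} (hδ : (Fintype.card ι : ℝ) ^ 2 * δ < 1)
    (hT : ∀ i j, ‖⟪T (b i), T (b j)⟫_ℂ - ⟪b i, b j⟫_ℂ‖ ≤ δ) :
    ∃ V : W →ₗᵢ[ℂ] K, ∀ x, ‖V x - T x‖ ≤ (Fintype.card ι : ℝ) ^ 2 * δ * ‖x‖ := by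
  refine exists_linearIsometry_near T hδ fun x => ?_
  have hb : ∀ j, ‖((T.adjoint ∘L T) - 1) (b j)‖ ≤ Fintype.card ι * δ := fun j => by
    rw [← b.sum_repr' (((T.adjoint ∘L T) - 1) (b j))]
    refine (norm_sum_le _ _).trans ?_
    rw [← nsmul_eq_mul, ← Finset.card_univ, ← Finset.sum_const]
    refine Finset.sum_le_sum fun i _ => ?_
    rw [norm_smul, b.norm_eq_one, mul_one]
    simpa [inner_sub_right, ContinuousLinearMap.adjoint_inner_right] using hT i j
  have := norm_apply_le_of_orthonormalBasis b
    (((T.adjoint ∘L T) - 1 : W →L[ℂ] W) : W →ₗ[ℂ] W) hb x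
  rw [sq, mul_assoc (Fintype.card ι : ℝ)]
  simpa using this

end Isometry

section FiniteDimensionalApproximation

variable {A W K : Type*} [CStarAlgebra A]
  [NormedAddCommGroup W] [InnerProductSpace ℂ W] [CompleteSpace W]
  [NormedAddCommGroup K] [InnerProductSpace ℂ K] [CompleteSpace K]

theorem CRep.inner_star_mul_apply (π : CRep A K) (a b : A) (x y : K) :
    ⟪π (star b * a) x, y⟫_ℂ = ⟪π a x, π b y⟫_ℂ := by
  rw [map_mul, ← CRep.inner_star_apply_left]
  rfl

theorem CRepIrreducible.surjective_apply [FiniteDimensional ℂ W] {ρ : CRep A W}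
    (hρ : CRepIrreducible ρ) {ξ : W} (hξ : ξ ≠ 0) : Function.Surjective fun a => ρ a ξ := by
  let orbit : A →ₗ[ℂ] W :=
    { toFun := fun a => ρ a ξ
      map_add' := fun a b => by simp
      map_smul' := fun c a => by simp }
  have h := hρ (LinearMap.range orbit) (Submodule.closed_of_finiteDimensional _) (by
    rintro a _ ⟨b, rfl⟩
    exact ⟨a * b, by simp [orbit]⟩)
  have hmem : ξ ∈ LinearMap.range orbit := ⟨1, by simp [orbit]⟩
  rcases h with h | h
  · rw [h, Submodule.mem_bot] at hmem
    exact absurd hmem hξ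
  · exact LinearMap.range_eq_top.1 h

theorem CRepPrec.exists_linearIsometry_almost_intertwining [FiniteDimensional ℂ W]
    {ρ : CRep A W} {θ : CRep A K} (hρ : CRepIrreducible ρ) (h : CRepPrec ρ θ) (Ω : Finset A)
    {ε : ℝ} (hε : 0 < ε) :
    ∃ V : W →ₗᵢ[ℂ] K, ∀ a ∈ Ω, ∀ x, ‖θ a (V x) - V (ρ a x)‖ ≤ ε * ‖x‖ := by
  classical
  rcases subsingleton_or_nontrivial W with hW | hW
  · refine ⟨⟨0, fun x => by simp [Subsingleton.elim x 0]⟩, fun a _ x => ?_⟩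
    simp [Subsingleton.elim x 0]
  obtain ⟨ξ, hξ⟩ := exists_norm_eq W zero_le_one
  have hξ0 : ξ ≠ 0 := norm_ne_zero_iff.1 (by simp [hξ])
  let orbit : A →ₗ[ℂ] W :=
    { toFun := fun a => ρ a ξ
      map_add' := fun a b => by simp
      map_smul' := fun c a => by simp }
  obtain ⟨s, hs⟩ := orbit.exists_rightInverse_of_surjective
    (LinearMap.range_eq_top.2 (hρ.surjective_apply hξ0))
  replace hs : ∀ x, ρ (s x) ξ = x := fun x => DFunLike.congr_fun hs x
  let b := stdOrthonormalBasis ℂ W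
  let n : ℝ := Fintype.card (Fin (Module.finrank ℂ W))
  let C : ℝ := ∑ a ∈ Ω, ‖a‖
  obtain ⟨t, ht0, ht1, ht2⟩ : ∃ t : ℝ, 0 < t ∧ n ^ 2 * t ^ 2 < 1 ∧
      2 * C * (n ^ 2 * t ^ 2) + n * t < ε := by
    have h1 : Filter.Tendsto (fun t : ℝ => n ^ 2 * t ^ 2) (nhdsWithin 0 (Set.Ioi 0))
        (nhds (n ^ 2 * 0 ^ 2)) :=
      ((by fun_prop : Continuous fun t : ℝ => n ^ 2 * t ^ 2).tendsto 0).mono_left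
        nhdsWithin_le_nhds
    have h2 : Filter.Tendsto (fun t : ℝ => 2 * C * (n ^ 2 * t ^ 2) + n * t)
        (nhdsWithin 0 (Set.Ioi 0)) (nhds (2 * C * (n ^ 2 * 0 ^ 2) + n * 0)) :=
      ((by fun_prop : Continuous fun t : ℝ => 2 * C * (n ^ 2 * t ^ 2) + n * t).tendsto 0).mono_left
        nhdsWithin_le_nhds
    exact ((eventually_mem_nhdsWithin).and ((h1.eventually_lt_const (by simp)).and
      (h2.eventually_lt_const (by simpa using hε)))).exists
  let defect : A → Fin (Module.finrank ℂ W) → A := fun a i => a * s (b i) - s (ρ a (b i))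
  let Ω' : Finset A :=
    (Finset.univ.image fun p : Fin (Module.finrank ℂ W) × Fin (Module.finrank ℂ W) =>
      star (s (b p.2)) * s (b p.1)) ∪
    ((Ω ×ˢ Finset.univ).image fun p => star (defect p.1 p.2) * defect p.1 p.2)
  obtain ⟨ζ, -, hζ⟩ := h Ω' 1 (fun _ => ξ) ⟨fun _ => hξ, fun i j hij =>
    absurd (Subsingleton.elim i j) hij⟩ (t ^ 2) (by positivity)
  let z := ζ 0
  let T : W →L[ℂ] K := LinearMap.toContinuousLinearMap
    { toFun := fun x => θ (s x) z
      map_add' := fun x y => by simp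
      map_smul' := fun c x => by simp }
  have hTapply : ∀ x, T x = θ (s x) z := fun _ => rfl
  have hgram : ∀ i j, ‖⟪T (b i), T (b j)⟫_ℂ - ⟪b i, b j⟫_ℂ‖ ≤ t ^ 2 := fun i j => by
    have := hζ (star (s (b j)) * s (b i))
      (Finset.mem_union_left _ (Finset.mem_image.2 ⟨(i, j), Finset.mem_univ _, rfl⟩)) 0
    rw [CRep.inner_star_mul_apply, CRep.inner_star_mul_apply, hs, hs, norm_sub_rev] at this
    exact this.le
  have hdefect : ∀ a ∈ Ω, ∀ i, ‖θ a (T (b i)) - T (ρ a (b i))‖ ≤ t := fun a ha i => by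
    have h1 : θ a (T (b i)) - T (ρ a (b i)) = θ (defect a i) z := by
      simp [hTapply, defect]
    have h2 : ρ (defect a i) ξ = 0 := by
      simp [defect, hs]
    have h3 := hζ (star (defect a i) * defect a i) (Finset.mem_union_right _
      (Finset.mem_image.2 ⟨(a, i), Finset.mem_product.2 ⟨ha, Finset.mem_univ _⟩, rfl⟩)) 0
    rw [CRep.inner_star_mul_apply, CRep.inner_star_mul_apply, h2, inner_zero_left, zero_sub,
      norm_neg, inner_self_eq_norm_sq_to_K] at h3
    rw [h1]
    refine le_of_sq_le_sq ?_ ht0.le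
    simpa using h3.le
  obtain ⟨V, hV⟩ := exists_linearIsometry_near_of_orthonormalBasis b T ht1 hgram
  refine ⟨V, fun a ha x => ?_⟩
  have haC : ‖a‖ ≤ C := Finset.single_le_sum (f := fun a : A => ‖a‖)
    (fun _ _ => norm_nonneg _) ha
  have e1 : ‖θ a (V x - T x)‖ ≤ C * (n ^ 2 * t ^ 2 * ‖x‖) :=
    (θ.norm_apply_apply_le a _).trans
      (mul_le_mul haC (hV x) (norm_nonneg _) ((norm_nonneg _).trans haC))
  have e2 : ‖θ a (T x) - T (ρ a x)‖ ≤ n * t * ‖x‖ :=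
    norm_apply_le_of_orthonormalBasis b
      ((θ a ∘L T - T ∘L ρ a : W →L[ℂ] K) : W →ₗ[ℂ] K) (hdefect a ha) x
  have e3 : ‖V (ρ a x) - T (ρ a x)‖ ≤ n ^ 2 * t ^ 2 * (C * ‖x‖) :=
    (hV _).trans (mul_le_mul_of_nonneg_left ((ρ.norm_apply_apply_le a x).trans
      (mul_le_mul_of_nonneg_right haC (norm_nonneg _))) (by positivity))
  have hsplit : θ a (V x) - V (ρ a x) =
      θ a (V x - T x) + (θ a (T x) - T (ρ a x)) - (V (ρ a x) - T (ρ a x)) := by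
    rw [map_sub]; abel
  rw [hsplit]
  refine (norm_sub_le _ _).trans ((add_le_add (norm_add_le _ _) le_rfl).trans ?_)
  nlinarith [mul_le_mul_of_nonneg_right ht2.le (norm_nonneg x)]

theorem CRepIrreducible.conj {ρ : CRep A W} (hρ : CRepIrreducible ρ) (U : W ≃ₗᵢ[ℂ] K) :
    CRepIrreducible (ρ.conj U) := by
  intro M hM hinv
  have h := hρ (M.comap (U.toLinearEquiv : W →ₗ[ℂ] K)) (hM.preimage U.continuous) (by
    intro a x hx
    have := hinv a _ hx
    simpa using this)
  have hmap : (M.comap (U.toLinearEquiv : W →ₗ[ℂ] K)).map (U.toLinearEquiv : W →ₗ[ℂ] K) = M :=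
    Submodule.map_comap_eq_of_surjective U.surjective M
  refine h.imp (fun h => ?_) (fun h => ?_)
  · rw [← hmap, h, Submodule.map_bot]
  · rw [← hmap, h, Submodule.map_top, LinearMap.range_eq_top]
    exact U.surjective

instance [TopologicalSpace.SeparableSpace W] [TopologicalSpace.SeparableSpace K] :
    TopologicalSpace.SeparableSpace (WithLp 2 (W × K)) :=
  (WithLp.prodContinuousLinearEquiv 2 ℂ W K).symm.surjective.denseRange.separableSpace
    (WithLp.prodContinuousLinearEquiv 2 ℂ W K).symm.continuous

end FiniteDimensionalApproximation

theorem exists_weaklyMixing_almost_intertwining.{u, v} {A : Type u} [CStarAlgebra A]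
    (hyp : ∀ (n : ℕ) (ρ : CRep A (EuclideanSpace ℂ (Fin n))), CRepIrreducible ρ →
      ∃ (K : Type) (_ : NormedAddCommGroup K) (_ : InnerProductSpace ℂ K)
        (_ : CompleteSpace K) (_ : TopologicalSpace.SeparableSpace K)
        (θ : CRep A K), CRepWeaklyMixing θ ∧ CRepPrec ρ θ)
    (Ω : Finset A) {ε : ℝ} (hε : 0 < ε) (n : ℕ) :
    ∀ (W : Type v) [NormedAddCommGroup W] [InnerProductSpace ℂ W] [CompleteSpace W]
      [FiniteDimensional ℂ W] (ρ : CRep A W), Module.finrank ℂ W = n →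
      ∃ (K : Type) (_ : NormedAddCommGroup K) (_ : InnerProductSpace ℂ K)
        (_ : CompleteSpace K) (_ : TopologicalSpace.SeparableSpace K)
        (θ : CRep A K), CRepWeaklyMixing θ ∧
          ∃ V : W →ₗᵢ[ℂ] K, ∀ a ∈ Ω, ∀ x, ‖θ a (V x) - V (ρ a x)‖ ≤ ε * ‖x‖ := by
  induction n using Nat.strong_induction_on with
  | _ n ih =>
  intro W _ _ _ _ ρ hn
  by_cases hirr : CRepIrreducible ρ
  · let U := (stdOrthonormalBasis ℂ W).repr
    obtain ⟨K, i1, i2, i3, i4, θ, hθ, hprec⟩ := hyp _ (ρ.conj U) (hirr.conj U)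
    obtain ⟨V, hV⟩ := hprec.exists_linearIsometry_almost_intertwining (hirr.conj U) Ω hε
    refine ⟨K, i1, i2, i3, i4, θ, hθ, V.comp U.toLinearIsometry, fun a ha x => ?_⟩
    simpa using hV a ha (U x)
  · simp only [CRepIrreducible, not_forall, not_or] at hirr
    obtain ⟨M, -, hM, hbot, htop⟩ := hirr
    have hM' : CRepInvariant ρ M := hM
    have hsum := M.finrank_add_finrank_orthogonal
    have hlt := Submodule.finrank_lt htop
    have hpos : 0 < Module.finrank ℂ M :=
      Module.finrank_pos_iff.2 (Submodule.nontrivial_iff_ne_bot.2 hbot)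
    obtain ⟨K₁, i1, i2, i3, i4, θ₁, hθ₁, V₁, hV₁⟩ :=
      ih _ (by omega) M (ρ.restrict M hM') rfl
    obtain ⟨K₂, j1, j2, j3, j4, θ₂, hθ₂, V₂, hV₂⟩ :=
      ih _ (by omega) Mᗮ (ρ.restrict Mᗮ hM'.orthogonal) rfl
    refine ⟨WithLp 2 (K₁ × K₂), inferInstance, inferInstance, inferInstance, inferInstance,
      θ₁.prod θ₂, hθ₁.prod hθ₂,
      (LinearIsometry.withLpProdMap 2 V₁ V₂).comp M.orthogonalDecomposition.toLinearIsometry,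
      fun a ha x => ?_⟩
    have hx := M.norm_sq_eq_add_norm_sq_projection x
    have h1 := hV₁ a ha (M.orthogonalProjectionOnto x)
    have h2 := hV₂ a ha (Mᗮ.orthogonalProjectionOnto x)
    have p1 : M.orthogonalProjectionOnto (ρ a x) =
        ρ.restrict M hM' a (M.orthogonalProjectionOnto x) :=
      Subtype.ext (hM'.starProjection_apply a x)
    have p2 : Mᗮ.orthogonalProjectionOnto (ρ a x) =
        ρ.restrict Mᗮ hM'.orthogonal a (Mᗮ.orthogonalProjectionOnto x) :=
      Subtype.ext (hM'.orthogonal.starProjection_apply a x)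
    rw [← p1] at h1
    rw [← p2] at h2
    refine le_of_sq_le_sq ?_ (by positivity)
    have hfst : ∀ y, (M.orthogonalDecomposition y).fst = M.orthogonalProjectionOnto y :=
      fun y => M.fst_orthogonalDecomposition_apply y
    have hsnd : ∀ y, (M.orthogonalDecomposition y).snd = Mᗮ.orthogonalProjectionOnto y :=
      fun y => M.snd_orthogonalDecomposition_apply y
    rw [← hfst, ← hfst] at h1
    rw [← hsnd, ← hsnd] at h2
    rw [← hfst, ← hsnd] at hx
    rw [WithLp.prod_norm_sq_eq_of_L2, mul_pow, hx, mul_add, ← mul_pow, ← mul_pow]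
    exact add_le_add (pow_le_pow_left₀ (norm_nonneg _) h1 2)
      (pow_le_pow_left₀ (norm_nonneg _) h2 2)

section UnitaryExtension

open TopologicalSpace

variable {H K : Type*}
  [NormedAddCommGroup H] [InnerProductSpace ℂ H] [NormedAddCommGroup K] [InnerProductSpace ℂ K]

theorem Orthonormal.countable_of_separableSpace [SeparableSpace H] {ι : Type*} {v : ι → H}
    (hv : Orthonormal ℂ v) : Countable ι := by
  have hdist : Pairwise fun i j => 1 ≤ dist (v i) (v j) := by
    intro i j hij
    have h := @norm_sub_sq ℂ _ _ _ _ (v i) (v j)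
    rw [hv.1 i, hv.1 j, hv.2 hij] at h
    rw [dist_eq_norm]
    simp only [map_zero] at h
    nlinarith [norm_nonneg (v i - v j)]
  have hdisj : (Set.univ : Set ι).PairwiseDisjoint fun i => Metric.ball (v i) (1 / 2) := by
    intro i _ j _ hij
    exact Metric.ball_disjoint_ball (by linarith [hdist hij])
  exact Set.countable_univ_iff.1 (hdisj.countable_of_isOpen (fun _ _ => Metric.isOpen_ball)
    fun i _ => ⟨v i, Metric.mem_ball_self (by norm_num)⟩)

theorem Submodule.not_finiteDimensional_orthogonal (hH : ¬ FiniteDimensional ℂ H)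
    (D : Submodule ℂ H) [FiniteDimensional ℂ D] : ¬ FiniteDimensional ℂ Dᗮ := by
  intro h
  have htop : FiniteDimensional ℂ (D ⊔ Dᗮ : Submodule ℂ H) := inferInstance
  rw [Submodule.sup_orthogonal_of_hasOrthogonalProjection] at htop
  exact hH (Module.Finite.equiv (Submodule.topEquiv (R := ℂ) (M := H)))

/-- The isometry `e + l ↦ (V e, l)` on a subspace of `E ⊔ L`. -/
theorem exists_linearIsometry_prod
    {E L D : Submodule ℂ H} [E.HasOrthogonalProjection] [L.HasOrthogonalProjection]
    (hEL : E ≤ Lᗮ) (hD : D ≤ E ⊔ L) (V : E →ₗᵢ[ℂ] K) :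
    ∃ G : D →ₗᵢ[ℂ] WithLp 2 (K × L), ∀ (x : D) (e : E) (l : L), (x : H) = e + l →
      G x = WithLp.toLp 2 (V e, l) := by
  let G : D →ₗ[ℂ] WithLp 2 (K × L) := (WithLp.linearEquiv 2 ℂ (K × L)).symm.toLinearMap ∘ₗ
    ((V.toLinearMap ∘ₗ (E.orthogonalProjectionOnto : H →ₗ[ℂ] E)).prod
      (L.orthogonalProjectionOnto : H →ₗ[ℂ] L)) ∘ₗ D.subtype
  have hG : ∀ (x : D) (e : E) (l : L), (x : H) = e + l → G x = WithLp.toLp 2 (V e, l) := by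
    intro x e l hx
    have h1 : E.orthogonalProjectionOnto (x : H) = e := by
      rw [hx, map_add, Submodule.orthogonalProjectionOnto_mem_subspace_eq_self,
        Submodule.orthogonalProjectionOnto_apply_of_mem_orthogonal, add_zero]
      exact fun u hu => (Submodule.mem_orthogonal' _ _).1 (hEL hu) l l.2
    have h2 : L.orthogonalProjectionOnto (x : H) = l := by
      rw [hx, map_add, Submodule.orthogonalProjectionOnto_mem_subspace_eq_self,
        Submodule.orthogonalProjectionOnto_apply_of_mem_orthogonal (hEL e.2), zero_add]
    change WithLp.toLp 2 (V (E.orthogonalProjectionOnto (x : H)),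
      L.orthogonalProjectionOnto (x : H)) = _
    rw [h1, h2]
  refine ⟨⟨G, fun x => ?_⟩, hG⟩
  obtain ⟨e, he, l, hl, hx⟩ := Submodule.mem_sup.1 (hD x.2)
  have hnx : ‖x‖ = ‖e + l‖ := by rw [hx]; rfl
  rw [hG x ⟨e, he⟩ ⟨l, hl⟩ hx.symm, ← sq_eq_sq₀ (norm_nonneg _) (norm_nonneg _),
    WithLp.prod_norm_sq_eq_of_L2, hnx]
  have horth : ⟪e, l⟫_ℂ = 0 := (Submodule.mem_orthogonal' _ _).1 (hEL he) l hl
  have := norm_add_sq_eq_norm_sq_add_norm_sq_of_inner_eq_zero e l horth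
  rw [sq ‖e + l‖, this]
  simp [sq]

variable [CompleteSpace H] [CompleteSpace K]

theorem nonempty_linearIsometryEquiv_l2 [SeparableSpace H] (hH : ¬ FiniteDimensional ℂ H) :
    Nonempty (H ≃ₗᵢ[ℂ] lp (fun _ : ℕ => ℂ) 2) := by
  obtain ⟨w, b, -⟩ := exists_hilbertBasis ℂ H
  have hcount : Countable w := b.orthonormal.countable_of_separableSpace
  have hinf : Infinite w := by
    by_contra hfin
    rw [not_infinite_iff_finite] at hfin
    have := Fintype.ofFinite w
    exact hH (b.toOrthonormalBasis.toBasis.finiteDimensional_of_finite)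
  obtain ⟨e⟩ := nonempty_equiv_of_countable (α := ℕ) (β := w)
  refine ⟨(HilbertBasis.mk (v := b ∘ e) (b.orthonormal.comp e e.injective) ?_).repr⟩
  rw [e.surjective.range_comp, b.dense_span]

/-- An isometry defined on a finite-dimensional subspace extends to a unitary between separable
infinite-dimensional Hilbert spaces. -/
theorem LinearIsometry.exists_linearIsometryEquiv_extension [SeparableSpace H] [SeparableSpace K]
    (hH : ¬ FiniteDimensional ℂ H) (hK : ¬ FiniteDimensional ℂ K) {D : Submodule ℂ H}
    [FiniteDimensional ℂ D] (V : D →ₗᵢ[ℂ] K) : ∃ U : H ≃ₗᵢ[ℂ] K, ∀ x : D, U x = V x := by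
  let R : Submodule ℂ K := LinearMap.range V.toLinearMap
  have := UniformSpace.secondCountable_of_separable H
  have := UniformSpace.secondCountable_of_separable K
  obtain ⟨J₁⟩ := nonempty_linearIsometryEquiv_l2 (Submodule.not_finiteDimensional_orthogonal hH D)
  obtain ⟨J₂⟩ := nonempty_linearIsometryEquiv_l2 (Submodule.not_finiteDimensional_orthogonal hK R)
  refine ⟨(D.orthogonalDecomposition.trans (LinearIsometryEquiv.withLpProdCongr 2 V.equivRange
    (J₁.trans J₂.symm))).trans R.orthogonalDecomposition.symm, fun x => ?_⟩
  simp

end UnitaryExtension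

section Density

open TopologicalSpace

variable {A H : Type*} [CStarAlgebra A]
  [NormedAddCommGroup H] [InnerProductSpace ℂ H] [CompleteSpace H]

/-- The span of all finite-dimensional invariant subspaces. -/
def CRep.compactPart (π : CRep A H) : Submodule ℂ H :=
  sSup {M : Submodule ℂ H | FiniteDimensional ℂ M ∧ CRepInvariant π M}

theorem CRep.compactPart_invariant (π : CRep A H) : CRepInvariant π π.compactPart :=
  CRepInvariant.sSup fun _ hM => hM.2

theorem CRep.exists_of_mem_compactPart {π : CRep A H} {x : H} (hx : x ∈ π.compactPart) :
    ∃ M : Submodule ℂ H, FiniteDimensional ℂ M ∧ CRepInvariant π M ∧ x ∈ M := by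
  have hdir : DirectedOn (· ≤ ·)
      {M : Submodule ℂ H | FiniteDimensional ℂ M ∧ CRepInvariant π M} := by
    rintro M ⟨hM, hM'⟩ N ⟨hN, hN'⟩
    exact ⟨M ⊔ N, ⟨inferInstance, hM'.sup hN'⟩, le_sup_left, le_sup_right⟩
  have hne : {M : Submodule ℂ H | FiniteDimensional ℂ M ∧ CRepInvariant π M}.Nonempty :=
    ⟨⊥, inferInstance, fun a x hx => by simp_all⟩
  obtain ⟨M, hM, hxM⟩ := (Submodule.mem_sSup_of_directed hne hdir).1 hx
  exact ⟨M, hM.1, hM.2, hxM⟩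

theorem CRep.restrict_compactPart_orthogonal_weaklyMixing (π : CRep A H) :
    CRepWeaklyMixing (π.restrict π.compactPartᗮ π.compactPart_invariant.orthogonal) := by
  intro M _ _ hM
  have hinv : CRepInvariant π (M.map π.compactPartᗮ.subtype) := hM.map fun _ _ => rfl
  have hle : M.map π.compactPartᗮ.subtype ≤ π.compactPart := le_sSup ⟨inferInstance, hinv⟩
  rw [eq_bot_iff]
  intro x hx
  have h0 := x.2 x (hle ⟨x, hx, rfl⟩)
  rw [inner_self_eq_zero] at h0
  exact Subtype.ext h0

/-- Finitely many vectors are approximated by sums of vectors from a common finite-dimensional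
invariant subspace and vectors orthogonal to the compact part. -/
theorem CRep.exists_finiteDimensional_approx (π : CRep A H) (F : Finset H) {δ : ℝ} (hδ : 0 < δ) :
    ∃ E : Submodule ℂ H, FiniteDimensional ℂ E ∧ CRepInvariant π E ∧ E ≤ π.compactPart ∧
      ∀ x ∈ F, ∃ e ∈ E, ‖x - (e + π.compactPartᗮ.starProjection x)‖ < δ := by
  classical
  induction F using Finset.induction_on with
  | empty => exact ⟨⊥, inferInstance, fun a x hx => by simp_all, bot_le, by simp⟩
  | insert x F _ ih =>
    obtain ⟨E, hE, hEinv, hEle, hEF⟩ := ih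
    have hmem : x - π.compactPartᗮ.starProjection x ∈ π.compactPartᗮᗮ :=
      Submodule.sub_starProjection_mem_orthogonal x
    rw [Submodule.orthogonal_orthogonal_eq_closure] at hmem
    obtain ⟨c, hc, hxc⟩ := Metric.mem_closure_iff.1 hmem δ hδ
    obtain ⟨M, hM, hMinv, hcM⟩ := CRep.exists_of_mem_compactPart hc
    refine ⟨E ⊔ M, inferInstance, hEinv.sup hMinv, sup_le hEle (le_sSup ⟨hM, hMinv⟩), ?_⟩
    intro y hy
    rcases Finset.mem_insert.1 hy with rfl | hy
    · refine ⟨c, le_sup_right (a := E) hcM, ?_⟩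
      rw [dist_eq_norm] at hxc
      rwa [add_comm, ← sub_sub]
    · obtain ⟨e, he, hye⟩ := hEF y hy
      exact ⟨e, le_sup_left (b := M) he, hye⟩

theorem dense_setOf_weaklyMixing [SeparableSpace H] (hH : ¬ FiniteDimensional ℂ H)
    (hyp : ∀ (n : ℕ) (ρ : CRep A (EuclideanSpace ℂ (Fin n))), CRepIrreducible ρ →
      ∃ (K : Type) (_ : NormedAddCommGroup K) (_ : InnerProductSpace ℂ K)
        (_ : CompleteSpace K) (_ : TopologicalSpace.SeparableSpace K)
        (θ : CRep A K), CRepWeaklyMixing θ ∧ CRepPrec ρ θ) :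
    Dense {π : CRep A H | CRepWeaklyMixing π} := by
  classical
  intro π
  refine CRep.mem_closure_of_approx fun Ω F ε hε => ?_
  have := UniformSpace.secondCountable_of_separable H
  have hnontriv : Nontrivial H := by
    by_contra h
    rw [not_nontrivial_iff_subsingleton] at h
    exact hH inferInstance
  obtain ⟨x₀, hx₀⟩ := exists_ne (0 : H)
  let C : ℝ := ∑ a ∈ Ω, ‖a‖
  have hC : 0 ≤ C := Finset.sum_nonneg fun _ _ => norm_nonneg _
  let δ : ℝ := min ‖x₀‖ (ε / (4 * (C + 1)))
  have hδ : 0 < δ := lt_min (norm_pos_iff.2 hx₀) (by positivity)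
  obtain ⟨E, hEfin, hEinv, hEle, hE⟩ := π.exists_finiteDimensional_approx (insert x₀ F) hδ
  choose! c hcE hc using hE
  let L : Submodule ℂ H := π.compactPartᗮ
  have hLinv : CRepInvariant π L := π.compactPart_invariant.orthogonal
  let B : ℝ := ∑ x ∈ F, ‖c x‖
  have hB : 0 ≤ B := Finset.sum_nonneg fun _ _ => norm_nonneg _
  obtain ⟨K, i1, i2, i3, i4, θ, hθ, V, hV⟩ :=
    exists_weaklyMixing_almost_intertwining hyp Ω (ε := ε / (4 * (B + 1))) (by positivity) _ E
      (π.restrict E hEinv) rfl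
  let q : H → L := fun x => ⟨L.starProjection x, L.starProjection_apply_mem x⟩
  let σ : CRep A L := π.restrict L hLinv
  let τ : CRep A (WithLp 2 (K × L)) := θ.prod σ
  have hτ : CRepWeaklyMixing τ := hθ.prod π.restrict_compactPart_orthogonal_weaklyMixing
  let vecs : Finset H := (insert x₀ F).image (fun x => (q x : H)) ∪
    (Ω ×ˢ F).image (fun p => (σ p.1 (q p.2) : H))
  let D : Submodule ℂ H := E ⊔ Submodule.span ℂ (vecs : Set H)
  have hDfin : FiniteDimensional ℂ D := inferInstance
  have hDle : D ≤ E ⊔ L := by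
    refine sup_le_sup_left (Submodule.span_le.2 fun y hy => ?_) E
    rcases Finset.mem_union.1 (Finset.mem_coe.1 hy) with hy | hy
    · obtain ⟨x, -, rfl⟩ := Finset.mem_image.1 hy
      exact (q x).2
    · obtain ⟨p, -, rfl⟩ := Finset.mem_image.1 hy
      exact (σ p.1 (q p.2)).2
  have hEL : E ≤ Lᗮ := hEle.trans (Submodule.le_orthogonal_orthogonal _)
  obtain ⟨G, hG⟩ := exists_linearIsometry_prod hEL hDle V
  have hEmem : ∀ {e l : H}, e ∈ E → l ∈ vecs → e + l ∈ D := fun he hl =>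
    Submodule.add_mem_sup he (Submodule.subset_span hl)
  have hq : ∀ x ∈ insert x₀ F, (q x : H) ∈ vecs := fun x hx =>
    Finset.mem_union_left _ (Finset.mem_image.2 ⟨x, hx, rfl⟩)
  have hnt : Nontrivial (WithLp 2 (K × L)) := by
    let y : D := ⟨c x₀ + q x₀, hEmem (hcE x₀ (Finset.mem_insert_self _ _))
      (hq x₀ (Finset.mem_insert_self _ _))⟩
    refine ⟨G y, 0, fun h => ?_⟩
    have hy : c x₀ + L.starProjection x₀ = 0 := by
      have := (map_eq_zero_iff G G.injective).1 h
      exact congrArg Subtype.val this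
    have h1 := hc x₀ (Finset.mem_insert_self _ _)
    rw [hy, sub_zero] at h1
    exact absurd (h1.trans_le (min_le_left _ _)) (lt_irrefl _)
  obtain ⟨U, hU⟩ := G.exists_linearIsometryEquiv_extension hH hτ.not_finiteDimensional
  refine ⟨τ.conj U.symm, hτ.conj U.symm, fun a ha x hx => ?_⟩
  have hx' : x ∈ insert x₀ F := Finset.mem_insert_of_mem hx
  have haC : ‖a‖ ≤ C := Finset.single_le_sum (f := fun a : A => ‖a‖)
    (fun _ _ => norm_nonneg _) ha
  have hcB : ‖c x‖ ≤ B := Finset.single_le_sum (f := fun x : H => ‖c x‖)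
    (fun _ _ => norm_nonneg _) hx
  let e : E := ⟨c x, hcE x hx'⟩
  let y : H := e + q x
  have hxy : ‖x - y‖ < ε / (4 * (C + 1)) := (hc x hx').trans_le (min_le_right _ _)
  have hUy : U y = WithLp.toLp 2 (V e, q x) := by
    have hyD : y ∈ D := hEmem e.2 (hq x hx')
    rw [hU ⟨y, hyD⟩]
    exact hG _ _ _ rfl
  have hUπy : U (π a y) = WithLp.toLp 2 (V (π.restrict E hEinv a e), σ a (q x)) := by
    have hsplit : π a y = (π.restrict E hEinv a e : H) + (σ a (q x) : H) := map_add _ _ _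
    have hyD : π a y ∈ D := by
      rw [hsplit]
      exact hEmem (Subtype.mem _) (Finset.mem_union_right _
        (Finset.mem_image.2 ⟨(a, x), Finset.mem_product.2 ⟨ha, hx⟩, rfl⟩))
    rw [hU ⟨π a y, hyD⟩]
    exact hG _ _ _ hsplit
  have hdiff : τ a (U y) - U (π a y) =
      WithLp.toLp 2 (θ a (V e) - V (π.restrict E hEinv a e), 0) := by
    rw [hUy, hUπy]
    refine WithLp.ofLp_injective 2 (Prod.ext rfl ?_)
    exact sub_self (σ a (q x))
  have h1 : ‖τ.conj U.symm a y - π a y‖ ≤ ε / 4 := by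
    have hnorm : ‖τ.conj U.symm a y - π a y‖ = ‖τ a (U y) - U (π a y)‖ := by
      rw [← U.norm_map, map_sub, CRep.conj_apply, LinearIsometryEquiv.symm_symm,
        LinearIsometryEquiv.apply_symm_apply]
    rw [hnorm, hdiff]
    have hfst : ‖WithLp.toLp 2 (θ a (V e) - V (π.restrict E hEinv a e), (0 : L))‖ =
        ‖θ a (V e) - V (π.restrict E hEinv a e)‖ := by
      rw [← sq_eq_sq₀ (norm_nonneg _) (norm_nonneg _), WithLp.prod_norm_sq_eq_of_L2]
      simp
    rw [hfst]
    refine (hV a ha e).trans ?_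
    have he : ‖e‖ ≤ B + 1 := hcB.trans (by linarith)
    calc ε / (4 * (B + 1)) * ‖e‖ ≤ ε / (4 * (B + 1)) * (B + 1) := by gcongr
      _ = ε / 4 := by field_simp
  have hbound : ∀ ρ : CRep A H, ‖ρ a (x - y)‖ ≤ ε / 4 := fun ρ => by
    calc ‖ρ a (x - y)‖ ≤ ‖a‖ * ‖x - y‖ := ρ.norm_apply_apply_le a _
      _ ≤ (C + 1) * (ε / (4 * (C + 1))) := by
        gcongr
        linarith
      _ = ε / 4 := by field_simp
  have hsplit : τ.conj U.symm a x - π a x =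
      τ.conj U.symm a (x - y) + (τ.conj U.symm a y - π a y) - π a (x - y) := by
    rw [map_sub, map_sub]; abel
  rw [hsplit]
  have := (norm_sub_le (τ.conj U.symm a (x - y) + (τ.conj U.symm a y - π a y))
    (π a (x - y))).trans (add_le_add (norm_add_le _ _) le_rfl)
  linarith [hbound (τ.conj U.symm), hbound π]

end Density

/-- let `A` be a separable unital C*-algebra and `H` a separable
infinite-dimensional Hilbert space. If every finite-dimensional irreducible unital
representation of `A` is weakly contained (in the sense of `≺`) in some weakly mixing unital
representation of `A` on a separable Hilbert space, then the weakly mixing representations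
form a dense Gδ subset of `Rep(A,H)` in the point-strong operator topology. -/
theorem dense_Gδ_weaklyMixing_of_fd_prec_weaklyMixing
    (A H : Type*) [CStarAlgebra A] [TopologicalSpace.SeparableSpace A]
    [NormedAddCommGroup H] [InnerProductSpace ℂ H] [CompleteSpace H]
    [TopologicalSpace.SeparableSpace H] (hH : ¬ FiniteDimensional ℂ H)
    (hyp : ∀ (n : ℕ) (ρ : CRep A (EuclideanSpace ℂ (Fin n))), CRepIrreducible ρ →
      ∃ (K : Type) (_ : NormedAddCommGroup K) (_ : InnerProductSpace ℂ K)
        (_ : CompleteSpace K) (_ : TopologicalSpace.SeparableSpace K)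
        (θ : CRep A K), CRepWeaklyMixing θ ∧ CRepPrec ρ θ) :
    Dense {π : CRep A H | CRepWeaklyMixing π} ∧
      IsGδ {π : CRep A H | CRepWeaklyMixing π} := by
  exact ⟨dense_setOf_weaklyMixing hH hyp, isGδ_setOf_weaklyMixing⟩
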